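/- Let a > 0 and r > 0, and let γ(a, r) be the Gamma distribution on (0,∞) with shape a and rate r (density r^a / Γ(a) · x^{a−1} e^{−r x}). Then ∫ log x dγ(a, r)(x) = ψ(a) − log r, where ψ(a) = deriv (log ∘ Γ) a is the digamma function. -/

import Mathlib

/-!
The logarithm is the sufficient statistic of the Gamma distributions with fixed rate. Hence its
moment-generating function is again a Gamma integral, `∫ x ^ t dγ(a,r)(x) = Γ(a+t) / (Γ(a) r ^ t)`,
and its mean is the derivative at `t = 0` of the cumulant-generating function
`log Γ(a+t) - log Γ(a) - t log r`.
-/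

open MeasureTheory ProbabilityTheory

open Set

section GammaMeasure

variable {a r : ℝ}

theorem integral_gammaMeasure {E : Type*} [NormedAddCommGroup E] [NormedSpace ℝ E]
    (ha : 0 < a) (hr : 0 < r) (f : ℝ → E) :
    ∫ x, f x ∂(gammaMeasure a r) = ∫ x in Ioi (0 : ℝ), gammaPDFReal a r x • f x := by
  have h_meas : Measurable (gammaPDF a r) := (measurable_gammaPDFReal a r).ennreal_ofReal
  have h_finite : ∀ᵐ x, gammaPDF a r x < ⊤ := .of_forall fun _ => ENNReal.ofReal_lt_top
  have h_toReal (x : ℝ) : (gammaPDF a r x).toReal = gammaPDFReal a r x :=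
    ENNReal.toReal_ofReal (gammaPDFReal_nonneg ha hr x)
  have h_support (x : ℝ) (hx : x ∉ Ici 0) : gammaPDFReal a r x • f x = 0 := by
    rw [gammaPDFReal, if_neg (notMem_Ici.mp hx).not_ge, zero_smul]
  rw [gammaMeasure, integral_withDensity_eq_integral_toReal_smul h_meas h_finite,
    ← integral_Ici_eq_integral_Ioi, setIntegral_eq_integral_of_forall_compl_eq_zero h_support]
  simp only [h_toReal]

theorem mgf_log_gammaMeasure {t : ℝ} (ha : 0 < a) (hr : 0 < r) (hat : 0 < a + t) :
    mgf Real.log (gammaMeasure a r) t = Real.Gamma (a + t) / (Real.Gamma a * r ^ t) := by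
  have h_tilt (x : ℝ) (hx : 0 < x) : gammaPDFReal a r x • Real.exp (t * Real.log x) =
      r ^ a / Real.Gamma a * (x ^ (a + t - 1) * Real.exp (-(r * x))) := by
    rw [gammaPDFReal, if_pos hx.le, smul_eq_mul, mul_comm t, ← Real.rpow_def_of_pos hx,
      add_sub_right_comm, Real.rpow_add hx]
    ring
  calc mgf Real.log (gammaMeasure a r) t
      = ∫ x in Ioi (0 : ℝ), gammaPDFReal a r x • Real.exp (t * Real.log x) :=
        integral_gammaMeasure ha hr _
    _ = r ^ a / Real.Gamma a * ∫ x in Ioi (0 : ℝ), x ^ (a + t - 1) * Real.exp (-(r * x)) := by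
        rw [setIntegral_congr_fun measurableSet_Ioi h_tilt, integral_const_mul]
    _ = r ^ a / Real.Gamma a * ((1 / r) ^ (a + t) * Real.Gamma (a + t)) := by
        rw [Real.integral_rpow_mul_exp_neg_mul_Ioi hat hr]
    _ = Real.Gamma (a + t) / (Real.Gamma a * r ^ t) := by
        rw [one_div, Real.inv_rpow hr.le, Real.rpow_add hr]
        field_simp

theorem Ioi_neg_subset_integrableExpSet_log_gammaMeasure (ha : 0 < a) (hr : 0 < r) :
    Ioi (-a) ⊆ integrableExpSet Real.log (gammaMeasure a r) := fun t ht => by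
  have hat : 0 < a + t := neg_lt_iff_pos_add'.mp ht
  have h_mgf : mgf Real.log (gammaMeasure a r) t ≠ 0 := by
    rw [mgf_log_gammaMeasure ha hr hat]
    positivity
  exact Integrable.of_integral_ne_zero h_mgf

theorem cgf_log_gammaMeasure {t : ℝ} (ha : 0 < a) (hr : 0 < r) (hat : 0 < a + t) :
    cgf Real.log (gammaMeasure a r) t =
      Real.log (Real.Gamma (a + t)) - Real.log (Real.Gamma a) - t * Real.log r := by
  rw [cgf, mgf_log_gammaMeasure ha hr hat, Real.log_div (by positivity) (by positivity),
    Real.log_mul (by positivity) (by positivity), Real.log_rpow hr, sub_sub]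

theorem hasDerivAt_cgf_log_gammaMeasure {t : ℝ} (ha : 0 < a) (hr : 0 < r) (hat : 0 < a + t) :
    HasDerivAt (cgf Real.log (gammaMeasure a r))
      (deriv (Real.log ∘ Real.Gamma) (a + t) - Real.log r) t := by
  have h_Gamma : DifferentiableAt ℝ Real.Gamma (a + t) :=
    Real.differentiableOn_Gamma_Ioi.differentiableAt (Ioi_mem_nhds hat)
  have h_log_Gamma : HasDerivAt (Real.log ∘ Real.Gamma)
      (deriv (Real.log ∘ Real.Gamma) (a + t)) (a + t) :=
    (h_Gamma.log (Real.Gamma_pos_of_pos hat).ne').hasDerivAt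
  have h_formula := ((h_log_Gamma.comp_const_add a t).sub_const (Real.log (Real.Gamma a))).sub
    (hasDerivAt_mul_const (Real.log r))
  refine h_formula.congr_of_eventuallyEq ?_
  filter_upwards [Ioi_mem_nhds (neg_lt_iff_pos_add'.mpr hat)] with u hu
  exact cgf_log_gammaMeasure ha hr (neg_lt_iff_pos_add'.mp hu)

end GammaMeasure

/-- Expected logarithm under a Gamma distribution with shape `a > 0` and rate `r > 0`:
`∫ log x dγ(a,r)(x) = ψ(a) − log r`, where `ψ = deriv (log ∘ Γ)` is the digamma
function. -/
theorem integral_log_gammaMeasure {a r : ℝ} (ha : 0 < a) (hr : 0 < r) :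
    ∫ x, Real.log x ∂(gammaMeasure a r) =
      deriv (Real.log ∘ Real.Gamma) a - Real.log r := by
  have : IsProbabilityMeasure (gammaMeasure a r) := isProbabilityMeasure_gammaMeasure ha hr
  have h_interior : 0 ∈ interior (integrableExpSet Real.log (gammaMeasure a r)) :=
    interior_maximal (Ioi_neg_subset_integrableExpSet_log_gammaMeasure ha hr) isOpen_Ioi
      (neg_lt_zero.mpr ha)
  calc ∫ x, Real.log x ∂(gammaMeasure a r)
      = deriv (cgf Real.log (gammaMeasure a r)) 0 := by
        rw [deriv_cgf_zero h_interior, probReal_univ, div_one]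
    _ = deriv (Real.log ∘ Real.Gamma) (a + 0) - Real.log r :=
        (hasDerivAt_cgf_log_gammaMeasure ha hr (by rwa [add_zero])).deriv
    _ = deriv (Real.log ∘ Real.Gamma) a - Real.log r := by rw [add_zero]
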